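/- arXiv:2109.10489 — 2 statements merged into one kernel-verified Lean document; each statement's English description precedes it below -/
import Mathlib

section
/- Fix a model size D > 0, M edge nodes with fronthaul capacities B^fr_m > 0 and backhaul capacities B^bk_m > 0, and a fixed assignment a : {1,…,K} → {1,…,M} of K users to edge nodes; let n_m be the number of users assigned to edge node m. For each m define g_m = D·n_m/B^fr_m + min(D/B^bk_m, n_m·D/B^bk_m) if n_m ≥ 1, and g_m = 0 if n_m = 0. Then max_{m} g_m is the least element of the set of network aggregation latencies { max_m T_m(r) : r is a feasible rate allocation }, where T_m(r) = max_{k : a(k)=m} (D/r_k) + min(D/B^bk_m, n_m·D/B^bk_m) if n_m ≥ 1 and T_m(r) = 0 otherwise, and feasibility means r_k > 0 for every user k and Σ_{k : a(k)=m} r_k ≤ B^fr_m for every m; the minimum is attained when every edge node m with n_m ≥ 1 splits its fronthaul bandwidth equally, r_k = B^fr_m/n_m for all k with a(k) = m. (Reduction of problem P1 to problem P2 for a fixed association matrix.) -/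
/-- Reduction of problem P1 to problem P2 for a fixed association: fix model size `D > 0`,
`M ≥ 1` edge nodes with fronthaul capacities `Bfr m > 0` and backhaul capacities
`Bbk m > 0`, and a fixed assignment `a` of `K` users to edge nodes with occupancy numbers
`nn m`.  With `g m = D·nn m/Bfr m + min (D/Bbk m) (nn m·D/Bbk m)` when `nn m ≥ 1` and
`g m = 0` otherwise, the value `max_m g m` is the least element of the set of network
aggregation latencies `max_m T r m` over all feasible rate allocations `r`
(`r k > 0` for every `k`, and at each edge node the rates sum to at most its fronthaul
capacity); the minimum is attained by the fair allocation `r k = Bfr (a k) / nn (a k)`. -/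
theorem fixed_assignment_fair_rates_optimal
    (K M : ℕ) (hM : 0 < M) (D : ℝ) (hD : 0 < D)
    (Bfr Bbk : Fin M → ℝ) (hBfr : ∀ m, 0 < Bfr m) (hBbk : ∀ m, 0 < Bbk m)
    (a : Fin K → Fin M)
    (nn : Fin M → ℕ)
    (hnn : ∀ m, nn m = (Finset.univ.filter (fun k => a k = m)).card)
    (g : Fin M → ℝ)
    (hg : ∀ m, g m = if 1 ≤ nn m then
        D * (nn m : ℝ) / Bfr m + min (D / Bbk m) ((nn m : ℝ) * D / Bbk m)
      else 0)
    (T : (Fin K → ℝ) → Fin M → ℝ)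
    (hT : ∀ r m, T r m =
      if h : (Finset.univ.filter (fun k => a k = m)).Nonempty then
        (Finset.univ.filter (fun k => a k = m)).sup' h (fun k => D / r k)
          + min (D / Bbk m) ((nn m : ℝ) * D / Bbk m)
      else 0) :
    IsLeast
      { x : ℝ | ∃ r : Fin K → ℝ, (∀ k, 0 < r k) ∧
          (∀ m, ∑ k ∈ Finset.univ.filter (fun k => a k = m), r k ≤ Bfr m) ∧
          x = Finset.univ.sup'
                (Finset.univ_nonempty_iff.mpr (Fin.pos_iff_nonempty.mp hM)) (T r) }
      (Finset.univ.sup'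
        (Finset.univ_nonempty_iff.mpr (Fin.pos_iff_nonempty.mp hM)) g)
    ∧ Finset.univ.sup'
        (Finset.univ_nonempty_iff.mpr (Fin.pos_iff_nonempty.mp hM))
        (T (fun k => Bfr (a k) / (nn (a k) : ℝ)))
      = Finset.univ.sup'
          (Finset.univ_nonempty_iff.mpr (Fin.pos_iff_nonempty.mp hM)) g := by
  have hpos : ∀ m, (Finset.univ.filter (fun k => a k = m)).Nonempty ↔ 1 ≤ nn m := by
    intro m
    rw [hnn m, Nat.one_le_iff_ne_zero, ← Nat.pos_iff_ne_zero, Finset.card_pos]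
  have hk : ∀ k, (0 : ℝ) < nn (a k) := by
    intro k
    have h1 : 1 ≤ nn (a k) := (hpos (a k)).mp ⟨k, by simp⟩
    exact_mod_cast h1
  have hfair : T (fun k => Bfr (a k) / (nn (a k) : ℝ)) = g := by
    funext m
    rw [hT, hg]
    by_cases h : (Finset.univ.filter (fun k => a k = m)).Nonempty
    · rw [dif_pos h, if_pos ((hpos m).mp h)]
      congr 1
      have hc : ∀ k ∈ Finset.univ.filter (fun k => a k = m),
          D / (Bfr (a k) / (nn (a k) : ℝ)) = D * (nn m : ℝ) / Bfr m := by
        intro k hkm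
        have hkm' : a k = m := by simpa using hkm
        rw [hkm', div_div_eq_mul_div]
      rw [Finset.sup'_congr h rfl hc, Finset.sup'_const]
    · rw [dif_neg h, if_neg (fun h' => h ((hpos m).mpr h'))]
  refine ⟨⟨⟨fun k => Bfr (a k) / (nn (a k) : ℝ), fun k => div_pos (hBfr _) (hk k), ?_, ?_⟩, ?_⟩, ?_⟩
  · intro m
    have hc : ∀ k ∈ Finset.univ.filter (fun k => a k = m),
        Bfr (a k) / (nn (a k) : ℝ) = Bfr m / (nn m : ℝ) := by
      intro k hkm
      have hkm' : a k = m := by simpa using hkm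
      rw [hkm']
    rw [Finset.sum_congr rfl hc, Finset.sum_const, ← hnn m, nsmul_eq_mul]
    by_cases h0 : (nn m : ℝ) = 0
    · rw [h0, zero_mul]
      exact (hBfr m).le
    · rw [mul_div_cancel₀ _ h0]
  · rw [hfair]
  · rintro x ⟨r, hr, hsum, rfl⟩
    refine Finset.sup'_mono_fun ?_
    intro m _
    rw [hT, hg]
    by_cases h : (Finset.univ.filter (fun k => a k = m)).Nonempty
    · rw [dif_pos h, if_pos ((hpos m).mp h)]
      have hn : (0 : ℝ) < nn m := by exact_mod_cast (hpos m).mp h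
      have hle : ∑ k ∈ Finset.univ.filter (fun k => a k = m), r k ≤
          ∑ k ∈ Finset.univ.filter (fun k => a k = m), Bfr m / (nn m : ℝ) := by
        rw [Finset.sum_const, ← hnn m, nsmul_eq_mul, mul_div_cancel₀ _ hn.ne']
        exact hsum m
      obtain ⟨k, hkm, hkr⟩ := Finset.exists_le_of_sum_le h hle
      have h1 : D * (nn m : ℝ) / Bfr m ≤ D / r k := by
        rw [← div_div_eq_mul_div]
        exact div_le_div_of_nonneg_left hD.le (hr k) hkr
      have h2 := Finset.le_sup' (fun k => D / r k) hkm
      have h3 := h1.trans h2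
      linarith
    · rw [dif_neg h, if_neg (fun h' => h ((hpos m).mpr h'))]
  · rw [hfair]
end

section
/- Fix a model size D > 0 and M edge nodes with fronthaul capacities B^fr_m > 0 and backhaul capacities B^bk_m > 0, and K ≥ 1 users. For an assignment a : {1,…,K} → {1,…,M} with occupancy numbers n_m(a), define G(a) = max_m g_m(a), where g_m(a) = D·n_m(a)/B^fr_m + min(D/B^bk_m, n_m(a)·D/B^bk_m) if n_m(a) ≥ 1 and g_m(a) = 0 otherwise. Then the infimum over all pairs (a, r) of assignments a and feasible rate allocations r of the network aggregation latency T(a,r) = max_m [ max_{k: a(k)=m} (D/r_k) + min(D/B^bk_m, n_m(a)·D/B^bk_m) ] equals min over assignments a of G(a); moreover it is attained by any assignment a* minimizing G together with the fair rates r_k = B^fr_m/n_m(a*) for each user k assigned to edge node m. (Lemma 3: the optimal solution of the joint routing and rate-allocation problem P1 is obtained from an optimal solution of the routing-only problem P2 by fair bandwidth sharing.) -/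
/-- Lemma 3: fix a model size `D > 0`, `M ≥ 1` edge nodes with fronthaul capacities
`Bfr m > 0` and backhaul capacities `Bbk m > 0`, and `K ≥ 1` users.  For an assignment
`a : Fin K → Fin M` with occupancy numbers `nn a m`, let
`G a = max_m g_m(a)` where `g_m(a) = D·nn a m/Bfr m + min (D/Bbk m) (nn a m·D/Bbk m)` if
`nn a m ≥ 1` and `0` otherwise.  Then the infimum over all pairs `(a, r)` of assignments
and feasible rate allocations of the network aggregation latency `T a r` equals
`min_a G a` (it is the least, i.e. attained, element of the set of achievable latencies);
moreover it is attained by any assignment `a` minimizing `G` together with the fair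
rates `r k = Bfr (a k) / nn a (a k)`. -/
theorem joint_routing_rate_allocation_optimal
    (K M : ℕ) (hK : 1 ≤ K) (hM : 0 < M) (D : ℝ) (hD : 0 < D)
    (Bfr Bbk : Fin M → ℝ) (hBfr : ∀ m, 0 < Bfr m) (hBbk : ∀ m, 0 < Bbk m)
    (nn : (Fin K → Fin M) → Fin M → ℕ)
    (hnn : ∀ a m, nn a m = (Finset.univ.filter (fun k => a k = m)).card)
    (G : (Fin K → Fin M) → ℝ)
    (hG : ∀ a, G a = Finset.univ.sup'
        (Finset.univ_nonempty_iff.mpr (Fin.pos_iff_nonempty.mp hM))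
        (fun m => if 1 ≤ nn a m then
            D * (nn a m : ℝ) / Bfr m + min (D / Bbk m) ((nn a m : ℝ) * D / Bbk m)
          else 0))
    (T : (Fin K → Fin M) → (Fin K → ℝ) → ℝ)
    (hT : ∀ a r, T a r = Finset.univ.sup'
        (Finset.univ_nonempty_iff.mpr (Fin.pos_iff_nonempty.mp hM))
        (fun m =>
          if h : (Finset.univ.filter (fun k => a k = m)).Nonempty then
            (Finset.univ.filter (fun k => a k = m)).sup' h (fun k => D / r k)
              + min (D / Bbk m) ((nn a m : ℝ) * D / Bbk m)
          else 0)) :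
    IsLeast
      { x : ℝ | ∃ (a : Fin K → Fin M) (r : Fin K → ℝ), (∀ k, 0 < r k) ∧
          (∀ m, ∑ k ∈ Finset.univ.filter (fun k => a k = m), r k ≤ Bfr m) ∧
          x = T a r }
      (Finset.univ.inf'
        (Finset.univ_nonempty_iff.mpr ⟨fun _ => ⟨0, hM⟩⟩) G)
    ∧ ∀ a : Fin K → Fin M, (∀ a' : Fin K → Fin M, G a ≤ G a') →
        T a (fun k => Bfr (a k) / (nn a (a k) : ℝ))
          = Finset.univ.inf'
              (Finset.univ_nonempty_iff.mpr ⟨fun _ => ⟨0, hM⟩⟩) G := by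
  have hpos : ∀ a k, (0 : ℝ) < (nn a (a k) : ℝ) := by
    intro a k
    rw [hnn]
    exact_mod_cast Finset.card_pos.mpr ⟨k, by simp⟩
  have hiff : ∀ a m, 1 ≤ nn a m ↔ (Finset.univ.filter (fun k => a k = m)).Nonempty := by
    intro a m
    rw [hnn, ← Finset.card_pos]
    rfl
  have hfair : ∀ a, T a (fun k => Bfr (a k) / (nn a (a k) : ℝ)) = G a := by
    intro a
    rw [hT, hG]
    refine Finset.sup'_congr _ rfl ?_
    intro m _
    by_cases h : (Finset.univ.filter (fun k => a k = m)).Nonempty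
    · rw [dif_pos h, if_pos ((hiff a m).2 h)]
      congr 1
      refine le_antisymm (Finset.sup'_le _ _ ?_) ?_
      · intro k hk
        have hk' : a k = m := by simpa using hk
        rw [hk', div_div_eq_mul_div]
      · obtain ⟨k, hk⟩ := h
        have hk' : a k = m := by simpa using hk
        refine le_trans (le_of_eq ?_) (Finset.le_sup' _ hk)
        rw [hk', div_div_eq_mul_div]
    · rw [dif_neg h, if_neg (fun h' => h ((hiff a m).1 h'))]
  have hlow : ∀ a r, (∀ k, 0 < r k) →
      (∀ m, ∑ k ∈ Finset.univ.filter (fun k => a k = m), r k ≤ Bfr m) → G a ≤ T a r := by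
    intro a r hr hs
    rw [hT, hG]
    refine Finset.sup'_mono_fun ?_
    intro m _
    by_cases h : (Finset.univ.filter (fun k => a k = m)).Nonempty
    · rw [dif_pos h, if_pos ((hiff a m).2 h)]
      gcongr
      set L := (Finset.univ.filter (fun k => a k = m)).sup' h (fun k => D / r k) with hL
      have hle : ∀ k ∈ Finset.univ.filter (fun k => a k = m), D / r k ≤ L := fun k hk =>
        Finset.le_sup' (fun k => D / r k) hk
      have hL0 : 0 ≤ L := by
        obtain ⟨k, hk⟩ := h
        exact le_trans (div_pos hD (hr k)).le (hle k hk)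
      rw [div_le_iff₀ (hBfr m)]
      calc D * (nn a m : ℝ) = ∑ k ∈ Finset.univ.filter (fun k => a k = m), D := by
            rw [Finset.sum_const, nsmul_eq_mul, hnn, mul_comm]
        _ ≤ ∑ k ∈ Finset.univ.filter (fun k => a k = m), L * r k :=
            Finset.sum_le_sum (fun k hk => (div_le_iff₀ (hr k)).1 (hle k hk))
        _ = L * ∑ k ∈ Finset.univ.filter (fun k => a k = m), r k := by rw [Finset.mul_sum]
        _ ≤ L * Bfr m := mul_le_mul_of_nonneg_left (hs m) hL0
    · rw [dif_neg h, if_neg (fun h' => h ((hiff a m).1 h'))]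
  refine ⟨⟨?_, ?_⟩, ?_⟩
  · obtain ⟨a, _, ha⟩ := Finset.exists_mem_eq_inf'
      (Finset.univ_nonempty_iff.mpr ⟨fun _ : Fin K => (⟨0, hM⟩ : Fin M)⟩) G
    refine ⟨a, fun k => Bfr (a k) / (nn a (a k) : ℝ),
      fun k => div_pos (hBfr _) (hpos a k), ?_, by rw [hfair]; exact ha⟩
    intro m
    have : ∑ k ∈ Finset.univ.filter (fun k => a k = m), Bfr (a k) / (nn a (a k) : ℝ)
        = ∑ k ∈ Finset.univ.filter (fun k => a k = m), Bfr m / (nn a m : ℝ) := by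
      refine Finset.sum_congr rfl ?_
      intro k hk
      have hk' : a k = m := by simpa using hk
      rw [hk']
    rw [this, Finset.sum_const, nsmul_eq_mul, ← hnn]
    by_cases h0 : (nn a m : ℝ) = 0
    · rw [h0, zero_mul]
      exact (hBfr m).le
    · rw [mul_div_cancel₀ _ h0]
  · rintro x ⟨a, r, hr, hs, rfl⟩
    exact le_trans (Finset.inf'_le _ (Finset.mem_univ a)) (hlow a r hr hs)
  · intro a ha
    rw [hfair]
    exact le_antisymm (Finset.le_inf' _ _ fun a' _ => ha a')
      (Finset.inf'_le _ (Finset.mem_univ a))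
end
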